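/- Let R be a commutative noetherian ring, C a finitely generated R-module, and M an injective R-module. Then for every i ≥ 0 there is an isomorphism Tor_i^R(C, Hom_R(C,M)) ≅ Hom_R(Ext^i_R(C,C), M). In particular, if C is n-semidualizing then Tor_i^R(C, Hom_R(C,M)) = 0 for 0 < i ≤ n and the evaluation map C ⊗_R Hom_R(C,M) → M is an isomorphism. -/

import Mathlib

open CategoryTheory
open scoped TensorProduct

/-- The evaluation map `ξ : C ⊗ Hom(C,M) → M`, `c ⊗ f ↦ f c`. -/
noncomputable def evalMap (R : Type) [CommRing R] (C M : Type) [AddCommGroup C] [Module R C]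
    [AddCommGroup M] [Module R M] : C ⊗[R] (C →ₗ[R] M) →ₗ[R] M :=
  TensorProduct.lift ((LinearMap.id : (C →ₗ[R] M) →ₗ[R] (C →ₗ[R] M)).flip)

/-- A finitely generated module `C` over a commutative ring `R` is `n`-semidualizing if the
natural homothety map `R → Hom_R(C,C)` is an isomorphism and `Ext^i_R(C,C) = 0` for
all `0 < i ≤ n`. -/
def IsSemidualizing (R : Type) [CommRing R] (C : Type) [AddCommGroup C] [Module R C]
    (n : ℕ) : Prop :=
  Module.Finite R C ∧ Function.Bijective (LinearMap.lsmul R C) ∧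
    ∀ i : ℕ, 0 < i → i ≤ n →
      Subsingleton (((Ext R (ModuleCat R) i).obj
        (Opposite.op (ModuleCat.of R C))).obj (ModuleCat.of R C))

namespace TorExt

/-- Hom evaluation. -/
noncomputable def theta (R : Type) [CommRing R] (L C M : Type) [AddCommGroup L] [Module R L]
    [AddCommGroup C] [Module R C] [AddCommGroup M] [Module R M] :
    L ⊗[R] (C →ₗ[R] M) →ₗ[R] ((L →ₗ[R] C) →ₗ[R] M) :=
  TensorProduct.lift (LinearMap.mk₂ R (fun l f => f ∘ₗ LinearMap.applyₗ l)
    (by intros; ext; simp) (by intros; ext; simp) (by intros; ext; simp) (by intros; ext; simp))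

section
variable {R : Type} [CommRing R] {L C M : Type} [AddCommGroup L] [Module R L]
    [AddCommGroup C] [Module R C] [AddCommGroup M] [Module R M]

@[simp]
lemma theta_tmul (l : L) (f : C →ₗ[R] M) (g : L →ₗ[R] C) :
    theta R L C M (l ⊗ₜ f) g = f (g l) := rfl

lemma theta_bijective_free (n : ℕ) : Function.Bijective (theta R (Fin n → R) C M) := by
  let inv : (((Fin n → R) →ₗ[R] C) →ₗ[R] M) →ₗ[R] (Fin n → R) ⊗[R] (C →ₗ[R] M) :=
    ∑ i : Fin n, (TensorProduct.mk R (Fin n → R) (C →ₗ[R] M) (Pi.single i 1)) ∘ₗ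
      (LinearMap.lcomp R M
        ((LinearMap.smulRightₗ (R := R) (M := C) (LinearMap.proj i : (Fin n → R) →ₗ[R] R))))
  have h1 : inv ∘ₗ theta R (Fin n → R) C M = LinearMap.id := by
    apply TensorProduct.ext'
    intro l f
    simp only [inv, LinearMap.comp_apply, LinearMap.sum_apply, TensorProduct.mk_apply,
      LinearMap.id_apply]
    have : ∀ i, LinearMap.lcomp R M
        ((LinearMap.smulRightₗ (R := R) (M := C) (LinearMap.proj i : (Fin n → R) →ₗ[R] R)))
        (theta R (Fin n → R) C M (l ⊗ₜ f)) = l i • f := by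
      intro i; ext c; simp
    simp only [this]
    simp only [← TensorProduct.smul_tmul, ← TensorProduct.sum_tmul]
    congr 1
    ext j
    simp [Pi.single_apply]
  have h2 : theta R (Fin n → R) C M ∘ₗ inv = LinearMap.id := by
    ext φ g
    simp only [inv, LinearMap.comp_apply, LinearMap.sum_apply, TensorProduct.mk_apply,
      LinearMap.id_apply, map_sum, theta_tmul, LinearMap.lcomp_apply]
    rw [← map_sum]
    congr 1
    ext j
    simp [Pi.single_apply]
  exact Function.bijective_iff_has_inverse.2 ⟨inv, fun x => DFunLike.congr_fun h1 x,
    fun x => DFunLike.congr_fun h2 x⟩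

lemma theta_natural {L' : Type} [AddCommGroup L'] [Module R L'] (u : L →ₗ[R] L')
    (x : L ⊗[R] (C →ₗ[R] M)) :
    theta R L' C M (u.rTensor _ x) = (theta R L C M x) ∘ₗ (LinearMap.lcomp R C u) := by
  induction x with
  | zero => simp
  | add x y hx hy => simp [hx, hy, LinearMap.add_comp]
  | tmul l f => ext g; simp

lemma exact_hom_injective (hM : Module.Injective R M) {A B D : Type} [AddCommGroup A] [Module R A]
    [AddCommGroup B] [Module R B] [AddCommGroup D] [Module R D]
    (f : A →ₗ[R] B) (g : B →ₗ[R] D) (h : Function.Exact f g) :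
    Function.Exact (LinearMap.lcomp R M g) (LinearMap.lcomp R M f) := by
  intro φ
  constructor
  · intro hφ
    have hk : LinearMap.ker g ≤ LinearMap.ker φ := by
      intro b hb
      obtain ⟨a, rfl⟩ := (h b).1 hb
      exact DFunLike.congr_fun hφ a
    let φ' := (LinearMap.ker g).liftQ φ hk
    let g' := (LinearMap.ker g).liftQ g le_rfl
    have hg' : Function.Injective g' := by
      rw [← LinearMap.ker_eq_bot]; exact Submodule.ker_liftQ_eq_bot _ _ _ le_rfl
    obtain ⟨ψ, hψ⟩ := hM.out g' hg' φ'
    refine ⟨ψ, ?_⟩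
    ext b
    exact hψ (Submodule.Quotient.mk b)
  · rintro ⟨ψ, rfl⟩
    ext a
    simp [h.apply_apply_eq_zero]

lemma lcomp_surjective (hM : Module.Injective R M) {A B : Type} [AddCommGroup A] [Module R A]
    [AddCommGroup B] [Module R B]
    (f : A →ₗ[R] B) (h : Function.Injective f) :
    Function.Surjective (LinearMap.lcomp R M f) := by
  intro φ
  obtain ⟨ψ, hψ⟩ := hM.out f h φ
  exact ⟨ψ, by ext a; exact hψ a⟩

lemma theta_bijective [IsNoetherianRing R] [Module.Finite R L] (hM : Module.Injective R M) :
    Function.Bijective (theta R L C M) := by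
  obtain ⟨n, p, hp⟩ := Module.Finite.exists_fin' R L
  obtain ⟨m, q, hq⟩ := Module.Finite.exists_fin' R (LinearMap.ker p)
  let r := (LinearMap.ker p).subtype ∘ₗ q
  have hr : Function.Exact r p := by
    intro x
    constructor
    · intro hx
      obtain ⟨y, hy⟩ := hq ⟨x, hx⟩
      exact ⟨y, by simp [r, hy]⟩
    · rintro ⟨y, rfl⟩
      exact (q y).2
  have e1 : Function.Exact (LinearMap.lcomp R C p) (LinearMap.lcomp R C r) := by
    intro φ
    constructor
    · intro hφ
      have hk : LinearMap.ker p ≤ LinearMap.ker φ := by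
        intro b hb
        obtain ⟨a, rfl⟩ := (hr b).1 hb
        exact DFunLike.congr_fun hφ a
      refine ⟨(LinearMap.ker p).liftQ φ hk ∘ₗ
        (p.quotKerEquivOfSurjective hp).symm.toLinearMap, ?_⟩
      refine LinearMap.ext fun x => ?_
      have : (p.quotKerEquivOfSurjective hp).symm (p x) = Submodule.Quotient.mk x := by
        rw [LinearEquiv.symm_apply_eq]; rfl
      simp [this]
    · rintro ⟨ψ, rfl⟩
      refine LinearMap.ext fun a => ?_
      simp [hr.apply_apply_eq_zero]
  have e2 : Function.Injective (LinearMap.lcomp R C p) := by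
    intro a b hab
    ext x
    obtain ⟨y, rfl⟩ := hp x
    exact DFunLike.congr_fun hab y
  refine LinearMap.bijective_of_surjective_of_bijective_of_right_exact
    (r.rTensor (C →ₗ[R] M)) (p.rTensor (C →ₗ[R] M))
    (LinearMap.lcomp R M (LinearMap.lcomp R C r)) (LinearMap.lcomp R M (LinearMap.lcomp R C p))
    (theta R _ C M) (theta R _ C M) (theta R _ C M) ?_ ?_ ?_ ?_ ?_ ?_ ?_ ?_
  · refine LinearMap.ext fun x => ?_; exact (theta_natural r x).symm
  · refine LinearMap.ext fun x => ?_; exact (theta_natural p x).symm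
  · exact rTensor_exact _ hr hp
  · exact exact_hom_injective hM _ _ e1
  · exact (theta_bijective_free m).2
  · exact theta_bijective_free n
  · exact LinearMap.rTensor_surjective _ hp
  · exact lcomp_surjective hM _ e2

lemma evalMap_bijective [IsNoetherianRing R] [Module.Finite R C] (hM : Module.Injective R M)
    (hC : Function.Bijective (LinearMap.lsmul R C)) :
    Function.Bijective (evalMap R C M) := by
  let e : R ≃ₗ[R] (C →ₗ[R] C) := LinearEquiv.ofBijective (LinearMap.lsmul R C) hC
  let s : ((C →ₗ[R] C) →ₗ[R] M) ≃ₗ[R] M :=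
    (LinearEquiv.congrLeft M R e.symm).trans (LinearMap.ringLmapEquivSelf R R M)
  have : evalMap R C M = s.toLinearMap ∘ₗ theta R C C M := by
    apply TensorProduct.ext'
    intro c f
    simp [s, evalMap, LinearEquiv.congrLeft, e]
  rw [this, LinearMap.coe_comp]
  exact s.bijective.comp (theta_bijective hM)

end
end TorExt
namespace TorExt
open CategoryTheory Limits

variable {R : Type} [CommRing R]

/-- The augmentation of a resolution. -/
noncomputable def aug {K : ModuleCat.{0} R} (Q : ProjectiveResolution K) : Q.complex.X 0 ⟶ K :=
  Q.π.f 0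

lemma d_aug {K : ModuleCat.{0} R} (Q : ProjectiveResolution K) :
    Q.complex.d 1 0 ≫ aug Q = 0 := Q.complex_d_comp_π_f_zero

instance {K : ModuleCat.{0} R} (Q : ProjectiveResolution K) : Epi (aug Q) :=
  inferInstanceAs (Epi (Q.π.f 0))

lemma exact_aug {K : ModuleCat.{0} R} (Q : ProjectiveResolution K) :
    (ShortComplex.mk _ _ (d_aug Q)).Exact := Q.exact₀

/-- Splice a resolution of the kernel onto a projective cover. -/
noncomputable def splice (S : ShortComplex (ModuleCat.{0} R)) (hS : S.ShortExact)
    [Projective S.X₂] (Q : ProjectiveResolution S.X₁) : ProjectiveResolution S.X₃ where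
  complex := Q.complex.augment (aug Q ≫ S.f) (by
    rw [← Category.assoc, d_aug, zero_comp])
  projective n := match n with
    | 0 => (inferInstance : Projective S.X₂)
    | n + 1 => Q.projective n
  π := (ChainComplex.toSingle₀Equiv _ _).symm ⟨S.g, by
    have h : (aug Q ≫ S.f) ≫ S.g = 0 := by rw [Category.assoc, S.zero, comp_zero]
    exact h⟩
  quasiIso := ⟨fun n => by
    have := hS.epi_g
    have := hS.mono_f
    have hepi : Epi (aug Q) := inferInstance
    cases n with
    | zero =>
      rw [ChainComplex.quasiIsoAt₀_iff, ShortComplex.quasiIso_iff_of_zeros']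
      · refine (ShortComplex.exact_and_epi_g_iff_of_iso (S₂ := ShortComplex.mk
          (aug Q ≫ S.f) S.g (by rw [Category.assoc, S.zero, comp_zero])) ?_).2
          ⟨?_, by dsimp; infer_instance⟩
        · exact ShortComplex.isoMk (Iso.refl _) (Iso.refl _) (Iso.refl _)
            (by simp; rfl) (by simp; rfl)
        · have h := hS.exact
          rw [ShortComplex.moduleCat_exact_iff] at h ⊢
          intro x hx
          obtain ⟨y, hy⟩ := h x hx
          obtain ⟨z, hz⟩ := (ModuleCat.epi_iff_surjective _).1 hepi y
          exact ⟨z, by rw [← hy, ← hz]; rfl⟩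
      all_goals rfl
    | succ n =>
      rw [quasiIsoAt_iff_exactAt']
      · rw [HomologicalComplex.exactAt_iff' _ (n + 2) (n + 1) n (by simp only [ChainComplex.prev]; rfl)
          (by simp)]
        cases n with
        | zero =>
          have h := (exact_aug Q)
          rw [ShortComplex.moduleCat_exact_iff] at h ⊢
          intro x hx
          exact h x ((ModuleCat.mono_iff_injective S.f).1 inferInstance (hx.trans (map_zero _).symm))
        | succ n => exact Q.exact_succ n
      · apply ChainComplex.exactAt_succ_single_obj⟩

lemma extShift (S : ShortComplex (ModuleCat.{0} R)) (hS : S.ShortExact)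
    [Projective S.X₂] (Y : ModuleCat.{0} R) (i : ℕ) :
    Nonempty (((Ext R (ModuleCat.{0} R) (i + 2)).obj (Opposite.op S.X₃)).obj Y ≅
      ((Ext R (ModuleCat.{0} R) (i + 1)).obj (Opposite.op S.X₁)).obj Y) := by
  let Q := projectiveResolution S.X₁
  refine ⟨(splice S hS Q).isoExt (i + 2) Y ≪≫ ?_ ≪≫ (Q.isoExt (i + 1) Y).symm⟩
  refine ShortComplex.homologyMapIso (HomologicalComplex.isoSc' _ (i + 1) (i + 2) (i + 3)
    (by simp) (by simp)) ≪≫ ShortComplex.homologyMapIso ?_ ≪≫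
    (ShortComplex.homologyMapIso (HomologicalComplex.isoSc' _ i (i + 1) (i + 2)
    (by simp) (by simp))).symm
  exact ShortComplex.isoMk (Iso.refl _) (Iso.refl _) (Iso.refl _)
    (by simp; rfl) (by simp; rfl)

lemma homology_surj (S : ShortComplex (ModuleCat.{0} R)) {A B : Type} [AddCommGroup A] [Module R A]
    [AddCommGroup B] [Module R B] (j : A →ₗ[R] S.X₂) (hj : Function.Injective j)
    (hr : Function.Exact j S.g) (s : B →ₗ[R] A)
    (hs : LinearMap.range (j ∘ₗ s) = LinearMap.range S.f.hom) :
    ∃ p : A →ₗ[R] S.homology, Function.Surjective p ∧ Function.Exact s p := by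
  let w : A →ₗ[R] LinearMap.ker S.g.hom := j.codRestrict _ (fun a => hr.apply_apply_eq_zero a)
  let q : A →ₗ[R] (S.moduleCatLeftHomologyData.H) := (Submodule.mkQ _) ∘ₗ w
  refine ⟨S.moduleCatHomologyIso.inv.hom ∘ₗ q, ?_, ?_⟩
  · have h1 : Function.Surjective S.moduleCatHomologyIso.inv.hom :=
      (ModuleCat.epi_iff_surjective _).1 inferInstance
    refine h1.comp ((Submodule.mkQ_surjective _).comp ?_)
    rintro ⟨x, hx⟩
    obtain ⟨a, ha⟩ := (hr x).1 hx
    exact ⟨a, Subtype.ext ha⟩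
  · have h1 : Function.Injective S.moduleCatHomologyIso.inv.hom :=
      (ModuleCat.mono_iff_injective _).1 inferInstance
    intro a
    have : (S.moduleCatHomologyIso.inv.hom ∘ₗ q) a = 0 ↔ q a = 0 :=
      map_eq_zero_iff S.moduleCatHomologyIso.inv.hom h1
    rw [this]
    have : q a = 0 ↔ j a ∈ LinearMap.range S.f.hom := by
      refine (Submodule.Quotient.mk_eq_zero _).trans ?_
      constructor
      · rintro ⟨x, hx⟩
        exact ⟨x, congrArg Subtype.val hx⟩
      · rintro ⟨x, hx⟩
        exact ⟨x, Subtype.ext hx⟩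
    rw [this, ← hs]
    constructor
    · rintro ⟨b, hb⟩
      exact ⟨b, hj hb⟩
    · rintro ⟨b, rfl⟩
      exact ⟨b, rfl⟩

lemma extOne (S : ShortComplex (ModuleCat.{0} R)) (hS : S.ShortExact)
    [Projective S.X₂] (Y : ModuleCat.{0} R) :
    ∃ p : (S.X₁ →ₗ[R] Y) →ₗ[R] ((Ext R (ModuleCat.{0} R) 1).obj (Opposite.op S.X₃)).obj Y,
      Function.Surjective p ∧ Function.Exact (LinearMap.lcomp R Y S.f.hom) p := by
  let Q := projectiveResolution S.X₁
  let P := splice S hS Q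
  have hepi : Epi (aug Q) := inferInstance
  let e : ((Ext R (ModuleCat.{0} R) 1).obj (Opposite.op S.X₃)).obj Y ≅
      ((P.complex.linearYonedaObj R Y).sc' 0 1 2).homology :=
    P.isoExt 1 Y ≪≫ ShortComplex.homologyMapIso (HomologicalComplex.isoSc' _ 0 1 2
      (by simp) (by simp))
  let j : (S.X₁ →ₗ[R] Y) →ₗ[R] ((P.complex.linearYonedaObj R Y).sc' 0 1 2).X₂ :=
    { toFun := fun f => (aug Q ≫ ModuleCat.ofHom f : Q.complex.X 0 ⟶ Y)
      map_add' := fun f g => by rfl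
      map_smul' := fun f g => by rfl }
  obtain ⟨p, hp1, hp2⟩ := homology_surj ((P.complex.linearYonedaObj R Y).sc' 0 1 2) j
    (by
      intro f g hfg
      have : aug Q ≫ ModuleCat.ofHom f = aug Q ≫ ModuleCat.ofHom g := hfg
      exact congrArg ModuleCat.Hom.hom ((cancel_epi _).1 this))
    (by
      intro (f : Q.complex.X 0 ⟶ Y)
      change Q.complex.d 1 0 ≫ f = 0 ↔ _
      constructor
      · intro hf
        refine ⟨((exact_aug Q).desc f hf).hom, (exact_aug Q).g_desc f hf⟩
      · rintro ⟨g, rfl⟩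
        change Q.complex.d 1 0 ≫ aug Q ≫ ModuleCat.ofHom g = 0
        rw [← Category.assoc, d_aug, zero_comp])
    (LinearMap.lcomp R Y S.f.hom)
    (by
      ext (x : Q.complex.X 0 ⟶ Y)
      constructor
      · rintro ⟨g, rfl⟩
        exact ⟨(ModuleCat.ofHom g : S.X₂ ⟶ Y), by rfl⟩
      · rintro ⟨(g : S.X₂ ⟶ Y), rfl⟩
        exact ⟨g.hom, by rfl⟩)
  refine ⟨e.inv.hom ∘ₗ p, ?_, ?_⟩
  · exact ((ModuleCat.epi_iff_surjective e.inv).1 inferInstance).comp hp1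
  · exact hp2.comp_injective _ ((ModuleCat.mono_iff_injective e.inv).1 inferInstance) (map_zero _)

instance (Y : ModuleCat.{0} R) : PreservesFiniteLimits ((linearYoneda R (ModuleCat.{0} R)).obj Y) := by
  have h : PreservesLimits ((linearYoneda R (ModuleCat.{0} R)).obj Y ⋙ forget (ModuleCat R)) :=
    inferInstanceAs (PreservesLimits (yoneda.obj Y))
  have : PreservesLimits ((linearYoneda R (ModuleCat.{0} R)).obj Y) :=
    preservesLimits_of_reflects_of_preserves _ (forget (ModuleCat R))
  infer_instance

lemma extZero (L Y : ModuleCat.{0} R) :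
    Nonempty (((Ext R (ModuleCat.{0} R) 0).obj (Opposite.op L)).obj Y ≃ₗ[R] (L →ₗ[R] Y)) := by
  have : PreservesFiniteColimits ((linearYoneda R (ModuleCat.{0} R)).obj Y).rightOp :=
    preservesFiniteColimits_rightOp _
  let e := (((linearYoneda R (ModuleCat.{0} R)).obj Y).rightOp.leftDerivedZeroIsoSelf.app L).unop
  exact ⟨e.symm.toLinearEquiv.trans (ModuleCat.homLinearEquiv (S := R))⟩

end TorExt
namespace TorExt
open CategoryTheory Limits MonoidalCategory

variable {R : Type} [CommRing R]

/-- The complex `A ⊗ Q`. -/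
noncomputable abbrev tc (A : ModuleCat.{0} R) (Q : ChainComplex (ModuleCat.{0} R) ℕ) :
    ChainComplex (ModuleCat.{0} R) ℕ :=
  (((tensoringLeft (ModuleCat.{0} R)).obj A).mapHomologicalComplex _).obj Q

/-- Functoriality. -/
noncomputable abbrev tcMap {A B : ModuleCat.{0} R} (f : A ⟶ B)
    (Q : ChainComplex (ModuleCat.{0} R) ℕ) : tc A Q ⟶ tc B Q :=
  (NatTrans.mapHomologicalComplex ((tensoringLeft (ModuleCat.{0} R)).map f) _).app Q

/-- Short complex of complexes. -/
noncomputable def tcS (S : ShortComplex (ModuleCat.{0} R))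
    (Q : ChainComplex (ModuleCat.{0} R) ℕ) : ShortComplex (ChainComplex (ModuleCat.{0} R) ℕ) :=
  ShortComplex.mk (tcMap S.f Q) (tcMap S.g Q) (by
    ext n : 1
    change S.f ▷ Q.X n ≫ S.g ▷ Q.X n = 0
    rw [← comp_whiskerRight, S.zero, MonoidalPreadditive.zero_whiskerRight])

lemma flat_of_projective (P : ModuleCat.{0} R) [Projective P] : Module.Flat R P := by
  have : Module.Projective R P := (IsProjective.iff_projective P).2 inferInstance
  infer_instance

lemma tcS_shortExact (S : ShortComplex (ModuleCat.{0} R)) (hS : S.ShortExact)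
    (Q : ChainComplex (ModuleCat.{0} R) ℕ) [∀ n, Projective (Q.X n)] : (tcS S Q).ShortExact := by
  apply HomologicalComplex.shortExact_of_degreewise_shortExact
  intro n
  have := flat_of_projective (Q.X n)
  have : PreservesFiniteColimits (tensorRight (Q.X n)) :=
    preservesFiniteColimits_of_natIso (BraidedCategory.tensorLeftIsoTensorRight (Q.X n))
  exact hS.map_of_exact (tensorRight (Q.X n))

lemma isZero_tc {N : ModuleCat.{0} R} (Q : ProjectiveResolution N) (F : ModuleCat.{0} R)
    [Projective F] (i : ℕ) : IsZero ((tc F Q.complex).homology (i + 1)) := by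
  rw [← HomologicalComplex.exactAt_iff_isZero_homology,
    HomologicalComplex.exactAt_iff' _ (i + 2) (i + 1) i (by simp only [ChainComplex.prev]; rfl)
          (by simp)]
  have := flat_of_projective F
  have h := Q.exact_succ i
  rw [ShortComplex.ShortExact.moduleCat_exact_iff_function_exact] at h ⊢
  exact Module.Flat.lTensor_exact F h

lemma torShift (S : ShortComplex (ModuleCat.{0} R)) (hS : S.ShortExact)
    [Projective S.X₂] (N : ModuleCat.{0} R) (i : ℕ) :
    Nonempty (((Tor (ModuleCat.{0} R) (i + 2)).obj S.X₃).obj N ≅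
      ((Tor (ModuleCat.{0} R) (i + 1)).obj S.X₁).obj N) := by
  let Q := projectiveResolution N
  exact ⟨Q.isoLeftDerivedObj _ (i + 2) ≪≫
    (tcS_shortExact S hS Q.complex).δIso (i + 2) (i + 1) (by simp) (isZero_tc Q S.X₂ (i + 1))
      (isZero_tc Q S.X₂ i) ≪≫ (Q.isoLeftDerivedObj _ (i + 1)).symm⟩

instance (A : ModuleCat.{0} R) :
    PreservesFiniteColimits ((tensoringLeft (ModuleCat.{0} R)).obj A) :=
  inferInstanceAs (PreservesFiniteColimits (tensorLeft A))

/-- `H_0 (A ⊗ Q) ≅ A ⊗ N`. -/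
noncomputable def h0 {N : ModuleCat.{0} R} (Q : ProjectiveResolution N) (A : ModuleCat.{0} R) :
    (tc A Q.complex).homology 0 ≅ ((tensoringLeft (ModuleCat.{0} R)).obj A).obj N :=
  ChainComplex.isoHomologyι₀ _ ≪≫
    asIso (Q.fromLeftDerivedZero' ((tensoringLeft (ModuleCat.{0} R)).obj A))

lemma h0_natural {N : ModuleCat.{0} R} (Q : ProjectiveResolution N) {A B : ModuleCat.{0} R}
    (f : A ⟶ B) : HomologicalComplex.homologyMap (tcMap f Q.complex) 0 ≫ (h0 Q B).hom =
      (h0 Q A).hom ≫ ((tensoringLeft (ModuleCat.{0} R)).map f).app N := by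
  have key : HomologicalComplex.opcyclesMap (tcMap f Q.complex) 0 ≫
      Q.fromLeftDerivedZero' ((tensoringLeft (ModuleCat.{0} R)).obj B) =
      Q.fromLeftDerivedZero' ((tensoringLeft (ModuleCat.{0} R)).obj A) ≫
        ((tensoringLeft (ModuleCat.{0} R)).map f).app N := by
    rw [← cancel_epi (HomologicalComplex.pOpcycles _ _),
      HomologicalComplex.p_opcyclesMap_assoc,
      ProjectiveResolution.pOpcycles_comp_fromLeftDerivedZero',
      ProjectiveResolution.pOpcycles_comp_fromLeftDerivedZero'_assoc]
    exact (((tensoringLeft (ModuleCat.{0} R)).map f).naturality (Q.π.f 0)).symm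
  have h2 := HomologicalComplex.homologyι_naturality (tcMap f Q.complex) 0
  simp only [h0, Iso.trans_hom, asIso_hom, Category.assoc]
  rw [← key]
  exact (Category.assoc _ _ _).symm.trans ((congrArg (· ≫ _) h2).trans (Category.assoc _ _ _))

lemma torOne (S : ShortComplex (ModuleCat.{0} R)) (hS : S.ShortExact)
    [Projective S.X₂] (N : ModuleCat.{0} R) :
    ∃ δ : ((Tor (ModuleCat.{0} R) 1).obj S.X₃).obj N →ₗ[R] S.X₁ ⊗[R] N,
      Function.Injective δ ∧ Function.Exact δ (S.f.hom.rTensor N) := by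
  let Q := projectiveResolution N
  have hQ := tcS_shortExact S hS Q.complex
  obtain ⟨d, hd, hex⟩ : ∃ d : (tc S.X₃ Q.complex).homology 1 ⟶ (tc S.X₁ Q.complex).homology 0,
      Function.Injective d.hom ∧
      Function.Exact d.hom (HomologicalComplex.homologyMap (tcMap S.f Q.complex) 0).hom := by
    refine ⟨hQ.δ 1 0 (by simp), (ModuleCat.mono_iff_injective _).1
      (hQ.mono_δ 1 0 (by simp) (isZero_tc Q S.X₂ 0)), ?_⟩
    exact (ShortComplex.ShortExact.moduleCat_exact_iff_function_exact _).1
      (hQ.homology_exact₁ 1 0 (by simp))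
  let e : ((Tor (ModuleCat.{0} R) 1).obj S.X₃).obj N ≃ₗ[R] (tc S.X₃ Q.complex).homology 1 :=
    (Q.isoLeftDerivedObj ((tensoringLeft (ModuleCat.{0} R)).obj S.X₃) 1).toLinearEquiv
  let u : (tc S.X₁ Q.complex).homology 0 ≃ₗ[R] S.X₁ ⊗[R] N := (h0 Q S.X₁).toLinearEquiv
  let v : (tc S.X₂ Q.complex).homology 0 ≃ₗ[R] S.X₂ ⊗[R] N := (h0 Q S.X₂).toLinearEquiv
  have huv : ∀ y, v ((HomologicalComplex.homologyMap (tcMap S.f Q.complex) 0).hom y) =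
      S.f.hom.rTensor N (u y) := fun y => ConcreteCategory.congr_hom (h0_natural Q S.f) y
  refine ⟨u.toLinearMap ∘ₗ d.hom ∘ₗ e.toLinearMap,
    u.injective.comp (hd.comp e.injective), ?_⟩
  intro x
  have h1 := huv (u.symm x)
  rw [LinearEquiv.apply_symm_apply] at h1
  rw [← h1, LinearEquiv.map_eq_zero_iff, hex]
  constructor
  · rintro ⟨z, hz⟩
    refine ⟨e.symm z, ?_⟩
    change u (d.hom (e (e.symm z))) = x
    rw [LinearEquiv.apply_symm_apply, hz, LinearEquiv.apply_symm_apply]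
  · rintro ⟨z, hz⟩
    refine ⟨e z, ?_⟩
    rw [← hz]
    exact (u.symm_apply_apply _).symm

lemma torZero (L N : ModuleCat.{0} R) :
    Nonempty (((Tor (ModuleCat.{0} R) 0).obj L).obj N ≃ₗ[R] L ⊗[R] N) :=
  ⟨(((tensoringLeft (ModuleCat.{0} R)).obj L).leftDerivedZeroIsoSelf.app N).toLinearEquiv⟩

lemma equiv_of_injective {T U X Y : Type} [AddCommGroup T] [Module R T]
    [AddCommGroup U] [Module R U] [AddCommGroup X] [Module R X] [AddCommGroup Y] [Module R Y]
    (a : T →ₗ[R] X) (b : U →ₗ[R] Y) (ha : Function.Injective a) (hb : Function.Injective b)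
    (e : X ≃ₗ[R] Y) (h : ∀ x, x ∈ LinearMap.range a ↔ e x ∈ LinearMap.range b) :
    Nonempty (T ≃ₗ[R] U) := by
  have h' : (LinearMap.range a).map e.toLinearMap = LinearMap.range b := by
    ext y
    constructor
    · rintro ⟨x, hx, rfl⟩
      exact (h x).1 hx
    · intro hy
      exact ⟨e.symm y, (h _).2 (by simpa using hy), by simp⟩
  exact ⟨(LinearEquiv.ofInjective a ha).trans ((e.submoduleMap _).trans
    ((LinearEquiv.ofEq _ _ h').trans (LinearEquiv.ofInjective b hb).symm))⟩

lemma main [IsNoetherianRing R] (C M : Type) [AddCommGroup C] [Module R C]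
    [AddCommGroup M] [Module R M] (hM : Module.Injective R M) (i : ℕ) :
    ∀ (L : ModuleCat.{0} R) [Module.Finite R L],
      Nonempty ((((Tor (ModuleCat R) i).obj L).obj (ModuleCat.of R (C →ₗ[R] M))) ≃ₗ[R]
        ((↑(((Ext R (ModuleCat R) i).obj
          (Opposite.op L)).obj (ModuleCat.of R C)) →ₗ[R] M))) := by
  induction i with
  | zero =>
    intro L _
    obtain ⟨e1⟩ := torZero L (ModuleCat.of R (C →ₗ[R] M))
    obtain ⟨e2⟩ := extZero L (ModuleCat.of R C)
    exact ⟨e1.trans ((LinearEquiv.ofBijective _ (theta_bijective (R := R) (L := L) (C := C) hM)).trans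
      (LinearEquiv.congrLeft M R e2.symm))⟩
  | succ i ih =>
    intro L _
    obtain ⟨n, p, hp⟩ := Module.Finite.exists_fin' R L
    let S : ShortComplex (ModuleCat.{0} R) := ShortComplex.mk
      (ModuleCat.ofHom (LinearMap.ker p).subtype) (ModuleCat.ofHom p : _ ⟶ L) (by
        ext x : 2; exact x.2)
    have hS : S.ShortExact := by
      refine ModuleCat.shortComplex_shortExact S ?_ Subtype.val_injective hp
      intro x
      exact ⟨fun hx => ⟨⟨x, hx⟩, rfl⟩, by rintro ⟨y, rfl⟩; exact y.2⟩
    have : Projective S.X₂ := by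
      apply (IsProjective.iff_projective S.X₂).1
      exact inferInstanceAs (Module.Projective R (Fin n → R))
    have : Module.Finite R S.X₁ := inferInstanceAs (Module.Finite R (LinearMap.ker p))
    cases i with
    | zero =>
      obtain ⟨δ, hδ, hex⟩ := torOne S hS (ModuleCat.of R (C →ₗ[R] M))
      obtain ⟨π, hπ, hex2⟩ := extOne S hS (ModuleCat.of R C)
      have hinj : Function.Injective (LinearMap.lcomp R M π) := by
        intro a b hab
        ext x
        obtain ⟨y, rfl⟩ := hπ x
        exact DFunLike.congr_fun hab y
      refine equiv_of_injective δ (LinearMap.lcomp R M π) hδ hinj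
        (LinearEquiv.ofBijective _ (theta_bijective (R := R) (L := S.X₁) (C := C) hM)) ?_
      intro x
      have h1 := hex x
      have h2 := exact_hom_injective hM _ _ hex2 (theta R S.X₁ C M x)
      have h3 : S.f.hom.rTensor (C →ₗ[R] M) x = 0 ↔
          LinearMap.lcomp R M (LinearMap.lcomp R C S.f.hom) (theta R S.X₁ C M x) = 0 := by
        have h4 := theta_natural (C := C) (M := M) S.f.hom x
        have h5 : Function.Injective (theta R S.X₂ C M) := (theta_bijective_free n).1
        rw [← map_eq_zero_iff _ h5, h4]
        rfl
      exact h1.symm.trans (h3.trans h2)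
    | succ i =>
      obtain ⟨e1⟩ := torShift S hS (ModuleCat.of R (C →ₗ[R] M)) i
      obtain ⟨e2⟩ := extShift S hS (ModuleCat.of R C) i
      obtain ⟨e⟩ := ih S.X₁
      exact ⟨e1.toLinearEquiv.trans (e.trans (LinearEquiv.congrLeft M R e2.toLinearEquiv.symm))⟩

end TorExt

theorem tor_iso_hom_ext_of_injective
    (R : Type) [CommRing R] [IsNoetherianRing R]
    (C : Type) [AddCommGroup C] [Module R C] [Module.Finite R C]
    (M : Type) [AddCommGroup M] [Module R M] (hM : Module.Injective R M) :
    (∀ i : ℕ,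
      Nonempty ((((Tor (ModuleCat R) i).obj
          (ModuleCat.of R C)).obj (ModuleCat.of R (C →ₗ[R] M))) ≃ₗ[R]
        ((↑(((Ext R (ModuleCat R) i).obj
          (Opposite.op (ModuleCat.of R C))).obj (ModuleCat.of R C)) →ₗ[R] M)))) ∧
    (∀ n : ℕ, IsSemidualizing R C n →
      (∀ i : ℕ, 0 < i → i ≤ n →
        Subsingleton (((Tor (ModuleCat R) i).obj
          (ModuleCat.of R C)).obj (ModuleCat.of R (C →ₗ[R] M)))) ∧
      Function.Bijective (evalMap R C M)) := by
  refine ⟨fun i => TorExt.main C M hM i (ModuleCat.of R C), fun n hC => ⟨fun i h0 hi => ?_,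
    TorExt.evalMap_bijective hM hC.2.1⟩⟩
  obtain ⟨e⟩ := TorExt.main C M hM i (ModuleCat.of R C)
  have := hC.2.2 i h0 hi
  exact e.toEquiv.subsingleton
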